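/- Assume p_1,…,p_m are positive rational numbers. Let 𝒮 ⊆ ℝ^{D_1}, with D_1 = ∑_{i,j} |𝒜_{ij}| d_i n_j, be the set of all matrix tuples V such that (V, p) is feasible. Then the graph of V ↦ cap(V, p) on 𝒮 is a semi-algebraic subset of ℝ^{D_1+1}; in particular, there exists a nonzero real polynomial P in D_1 + 1 variables such that P(V, cap(V, p)) = 0 for every V ∈ 𝒮. -/

import Mathlib

open Matrix BigOperators

/-- The value of the capacity functional of a quiver datum `(V, p)` at a tuple `Y`
of `n j × n j` matrices. -/
noncomputable def capVal {k m : ℕ} {d : Fin k → ℕ} {n : Fin m → ℕ} {A : Fin k → Fin m → ℕ}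
    (p : Fin m → ℝ)
    (V : ∀ i : Fin k, ∀ j : Fin m, Fin (A i j) → Matrix (Fin (n j)) (Fin (d i)) ℝ)
    (Y : ∀ j : Fin m, Matrix (Fin (n j)) (Fin (n j)) ℝ) : ℝ :=
  (∏ i : Fin k, (∑ j : Fin m, p j • ∑ a : Fin (A i j), (V i j a)ᵀ * Y j * V i j a).det) /
    ∏ j : Fin m, (Y j).det ^ (p j)

/-- The capacity `cap(V, p)` of a quiver datum: the infimum of the capacity functional
over all tuples of positive definite matrices. -/
noncomputable def cap {k m : ℕ} {d : Fin k → ℕ} {n : Fin m → ℕ} {A : Fin k → Fin m → ℕ}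
    (p : Fin m → ℝ)
    (V : ∀ i : Fin k, ∀ j : Fin m, Fin (A i j) → Matrix (Fin (n j)) (Fin (d i)) ℝ) : ℝ :=
  sInf { r : ℝ | ∃ Y : ∀ j : Fin m, Matrix (Fin (n j)) (Fin (n j)) ℝ,
    (∀ j, (Y j).PosDef) ∧ r = capVal p V Y }

/-- A quiver datum `(V, p)` is extremizable if it is feasible (`cap(V,p) > 0`) and the
infimum defining the capacity is attained at some tuple of positive definite matrices. -/
def Extremizable {k m : ℕ} {d : Fin k → ℕ} {n : Fin m → ℕ} {A : Fin k → Fin m → ℕ}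
    (p : Fin m → ℝ)
    (V : ∀ i : Fin k, ∀ j : Fin m, Fin (A i j) → Matrix (Fin (n j)) (Fin (d i)) ℝ) : Prop :=
  0 < cap p V ∧ ∃ Y : ∀ j : Fin m, Matrix (Fin (n j)) (Fin (n j)) ℝ,
    (∀ j, (Y j).PosDef) ∧ capVal p V Y = cap p V

/-- A quiver datum `(V, p)` is geometric. -/
def IsGeometric {k m : ℕ} {d : Fin k → ℕ} {n : Fin m → ℕ} {A : Fin k → Fin m → ℕ}
    (p : Fin m → ℝ)
    (V : ∀ i : Fin k, ∀ j : Fin m, Fin (A i j) → Matrix (Fin (n j)) (Fin (d i)) ℝ) : Prop :=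
  (∀ i, ∑ j : Fin m, p j • ∑ a : Fin (A i j), (V i j a)ᵀ * V i j a = 1) ∧
  (∀ j, ∑ i : Fin k, ∑ a : Fin (A i j), V i j a * (V i j a)ᵀ = 1)

/-- The index set of coordinates on the space `ℝ^{D₁}` of matrix tuples,
`D₁ = ∑_{i,j} |𝒜_{ij}| d_i n_j`. -/
abbrev QIdx (k m : ℕ) (d : Fin k → ℕ) (n : Fin m → ℕ) (A : Fin k → Fin m → ℕ) : Type :=
  (i : Fin k) × (j : Fin m) × (Fin (A i j) × Fin (n j) × Fin (d i))

/-- Reassemble a point of `ℝ^{D₁}` into a tuple of matrices (a quiver datum). -/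
def toDatum {k m : ℕ} {d : Fin k → ℕ} {n : Fin m → ℕ} {A : Fin k → Fin m → ℕ}
    (x : QIdx k m d n A → ℝ) :
    ∀ i : Fin k, ∀ j : Fin m, Fin (A i j) → Matrix (Fin (n j)) (Fin (d i)) ℝ :=
  fun i j a => Matrix.of fun r c => x ⟨i, j, a, r, c⟩

/-- A subset of `ℝ^ι` (`ι` finite) is semi-algebraic if it is a finite union of sets, each
defined by finitely many polynomial equalities and finitely many strict polynomial
inequalities. -/
def IsSemialgebraic {ι : Type} [Fintype ι] (S : Set (ι → ℝ)) : Prop :=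
  ∃ (N M : ℕ) (P : Fin N → Fin M → MvPolynomial ι ℝ) (isEq : Fin N → Fin M → Bool),
    S = ⋃ t : Fin N, { x | ∀ l : Fin M,
      if isEq t l then MvPolynomial.eval x (P t l) = 0
      else 0 < MvPolynomial.eval x (P t l) }

/-!
Write `Y j = (B j)ᵀ * B j` with `B j` invertible and raise to a common denominator of the weights:
`cap(V, p) < c` then says that `c > 0` and that some tuple `B` satisfies a polynomial inequality in
`B`, `V` and `c`. By Tarski–Seidenberg, the epigraph of `cap`, and hence its graph, is determined by
the signs of finitely many polynomials. A graph has empty interior, so at each of its points one of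
the nonzero polynomials among these vanishes, and their product is the polynomial `P`.

Tarski–Seidenberg reduces to eliminating one variable. Enlarge the given polynomials to a finite
family closed under derivatives, erasing leading terms and pseudo-remainders. The signs of the
leading coefficients then determine which sign conditions the family realizes: remove a polynomial
`p` of maximal degree and argue inductively. By Thom's lemma the smaller family cuts the line into
points and open intervals in a determined order. At the points the sign of `p` is that of a
remainder, and on the intervals `p` is monotone, so the signs it takes there follow from its signs
at the endpoints and from its unboundedness at infinity.
-/

section PseudoRemainder

open Polynomial

variable {R : Type*} [CommRing R] {f p r : R[X]}

/-- `r` is a pseudo-remainder of `p` on division by `f`: a remainder after multiplying `p` by a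
power of the leading coefficient of `f`. The power is even so that this multiplication does not
change signs at real points. -/
def IsPseudoRemainder (f p r : R[X]) : Prop :=
  r.natDegree < f.natDegree ∧ ∃ k, f ∣ C (f.leadingCoeff ^ (2 * k)) * p - r

lemma isPseudoRemainder_self (h : p.natDegree < f.natDegree) : IsPseudoRemainder f p p :=
  ⟨h, 0, by simp⟩

lemma exists_isPseudoRemainder (hf : f.natDegree ≠ 0) (p : R[X]) :
    ∃ r, IsPseudoRemainder f p r := by
  induction hn : p.natDegree using Nat.strong_induction_on generalizing p with
  | _ n ih =>
    obtain hlt | hle := lt_or_ge p.natDegree f.natDegree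
    · exact ⟨p, isPseudoRemainder_self hlt⟩
    have hdeg : (C f.leadingCoeff * f.cancelLeads p).natDegree < n :=
      (natDegree_C_mul_le _ _).trans_lt <|
        hn ▸ natDegree_cancelLeads_lt_of_natDegree_le_natDegree hle (by lia)
    obtain ⟨r, hr, k, hdvd⟩ := ih _ hdeg _ rfl
    refine ⟨r, hr, k + 1, ?_⟩
    have hcancel : C f.leadingCoeff * p = f.cancelLeads p +
        f * (C p.leadingCoeff * X ^ (p.natDegree - f.natDegree)) := by
      rw [cancelLeads, tsub_eq_zero_of_le hle]
      ring
    have hsplit : C (f.leadingCoeff ^ (2 * (k + 1))) * p - r =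
        (C (f.leadingCoeff ^ (2 * k)) * (C f.leadingCoeff * f.cancelLeads p) - r) +
          f * (C (f.leadingCoeff ^ (2 * k + 1)) *
            (C p.leadingCoeff * X ^ (p.natDegree - f.natDegree))) := by
      simp only [C_pow]
      linear_combination C f.leadingCoeff ^ (2 * k + 1) * hcancel
    exact hsplit ▸ dvd_add hdvd (dvd_mul_right _ _)

end PseudoRemainder

lemma exists_finset_superset_closed {α : Type*} (deg : α → ℕ) (op : α → α → Finset α)
    (hop : ∀ f p, ∀ r ∈ op f p, deg r < deg f) (F : Finset α) :
    ∃ E, F ⊆ E ∧ ∀ f ∈ E, ∀ p ∈ E, deg f ≤ deg p → op f p ⊆ E := by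
  classical
  suffices closed_above : ∀ (k : ℕ) (F : Finset α),
      (∀ f ∈ F, ∀ p ∈ F, k ≤ deg f → deg f ≤ deg p → op f p ⊆ F) →
      ∃ E, F ⊆ E ∧ ∀ f ∈ E, ∀ p ∈ E, deg f ≤ deg p → op f p ⊆ E from
    closed_above (F.sup deg + 1) F fun f hf _ _ hk => absurd (Finset.le_sup (f := deg) hf) (by lia)
  intro k
  induction k with
  | zero => exact fun F hF => ⟨F, subset_rfl, fun f hf p hp => hF f hf p hp (Nat.zero_le _)⟩
  | succ k ih =>
    intro F hF
    let new : Finset α := {f ∈ F | deg f = k}.biUnion fun f => F.biUnion (op f)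
    have mem_of_le : ∀ g ∈ F ∪ new, k ≤ deg g → g ∈ F := by
      intro g hg hk
      refine (Finset.mem_union.1 hg).resolve_right fun hnew => ?_
      simp only [new, Finset.mem_biUnion, Finset.mem_filter] at hnew
      obtain ⟨f, ⟨-, rfl⟩, p, -, hgp⟩ := hnew
      exact (hop f p g hgp).not_ge hk
    obtain ⟨E, hE, hclosed⟩ := ih (F ∪ new) fun f hf p hp hk hfp => by
      have hfF := mem_of_le f hf hk
      have hpF := mem_of_le p hp (hk.trans hfp)
      obtain hkf | hkf := hk.eq_or_lt
      · refine Finset.Subset.trans (fun r hr => ?_) Finset.subset_union_right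
        exact Finset.mem_biUnion.2 ⟨f, Finset.mem_filter.2 ⟨hfF, hkf.symm⟩,
          Finset.mem_biUnion.2 ⟨p, hpF, hr⟩⟩
      · exact (hF f hfF p hpF hkf hfp).trans Finset.subset_union_left
    exact ⟨E, Finset.subset_union_left.trans hE, hclosed⟩

section ReductionClosed

open Polynomial

variable {R : Type*} [CommRing R] {E : Finset R[X]} {p : R[X]}

/-- A finite family of polynomials closed under the degree-lowering operations of sign
elimination; constants are exempt. -/
structure IsReductionClosed (E : Finset R[X]) : Prop where
  derivative_mem : ∀ f ∈ E, f.natDegree ≠ 0 → derivative f ∈ E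
  eraseLead_mem : ∀ f ∈ E, f.natDegree ≠ 0 → f.eraseLead ∈ E
  exists_isPseudoRemainder_mem :
    ∀ f ∈ E, ∀ p ∈ E, f.natDegree ≠ 0 → ∃ r ∈ E, IsPseudoRemainder f p r

lemma natDegree_eraseLead_lt_of_ne_zero (hp : p.natDegree ≠ 0) :
    p.eraseLead.natDegree < p.natDegree :=
  p.eraseLead_natDegree_le.trans_lt (Nat.sub_one_lt hp)

lemma exists_isReductionClosed (F : Finset R[X]) : ∃ E, F ⊆ E ∧ IsReductionClosed E := by
  classical
  choose! rem hrem using fun (f : R[X]) (hf : f.natDegree ≠ 0) => exists_isPseudoRemainder hf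
  let op (f p : R[X]) : Finset R[X] :=
    if f.natDegree = 0 then ∅ else {derivative f, f.eraseLead, rem f p}
  have op_of_ne_zero {f p : R[X]} (hf : f.natDegree ≠ 0) :
      op f p = {derivative f, f.eraseLead, rem f p} := if_neg hf
  have natDegree_lt_of_mem_op (f p r : R[X]) (hr : r ∈ op f p) : r.natDegree < f.natDegree := by
    by_cases hf : f.natDegree = 0
    · simp [op, hf] at hr
    · simp only [op_of_ne_zero hf, Finset.mem_insert, Finset.mem_singleton] at hr
      obtain rfl | rfl | rfl := hr
      · exact natDegree_derivative_lt hf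
      · exact natDegree_eraseLead_lt_of_ne_zero hf
      · exact (hrem f hf p).1
  obtain ⟨E, hFE, hE⟩ := exists_finset_superset_closed natDegree op natDegree_lt_of_mem_op F
  refine ⟨E, hFE, ⟨fun f hf hf0 => ?_, fun f hf hf0 => ?_, fun f hf p hp hf0 => ?_⟩⟩
  · exact hE f hf f hf le_rfl (by simp [op_of_ne_zero hf0])
  · exact hE f hf f hf le_rfl (by simp [op_of_ne_zero hf0])
  · obtain hlt | hle := lt_or_ge p.natDegree f.natDegree
    · exact ⟨p, hp, isPseudoRemainder_self hlt⟩
    · exact ⟨rem f p, hE f hf p hp hle (by simp [op_of_ne_zero hf0]), hrem f hf0 p⟩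

lemma IsReductionClosed.erase [DecidableEq R[X]] (hE : IsReductionClosed E)
    (hp : ∀ f ∈ E, f.natDegree ≤ p.natDegree) : IsReductionClosed (E.erase p) := by
  have mem_erase_of_lt {f r : R[X]} (hf : f ∈ E.erase p) (hr : r ∈ E)
      (h : r.natDegree < f.natDegree) : r ∈ E.erase p := by
    refine Finset.mem_erase.2 ⟨?_, hr⟩
    rintro rfl
    exact h.not_ge (hp f (Finset.mem_of_mem_erase hf))
  refine ⟨fun f hf hf0 => ?_, fun f hf hf0 => ?_, fun f hf q hq hf0 => ?_⟩ <;>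
    have hfE := Finset.mem_of_mem_erase hf
  · exact mem_erase_of_lt hf (hE.derivative_mem f hfE hf0) (natDegree_derivative_lt hf0)
  · exact mem_erase_of_lt hf (hE.eraseLead_mem f hfE hf0) (natDegree_eraseLead_lt_of_ne_zero hf0)
  · obtain ⟨r, hr, hrem⟩ :=
      hE.exists_isPseudoRemainder_mem f hfE q (Finset.mem_of_mem_erase hq) hf0
    exact ⟨r, mem_erase_of_lt hf hr hrem.1, hrem⟩

end ReductionClosed

section Signs

open SignType

variable {A : Type*} [CommRing A]

/-- Two real points `φ` and `ψ` of `A` satisfy the same sign conditions on the family `E`. For a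
polynomial ring `A`, the homomorphisms `A →+* ℝ` are the evaluations at real points. -/
def SignEq (E : Finset A) (φ ψ : A →+* ℝ) : Prop :=
  ∀ f ∈ E, sign (φ f) = sign (ψ f)

namespace SignEq

variable {E F : Finset A} {φ ψ χ : A →+* ℝ}

@[refl] lemma refl (E : Finset A) (φ : A →+* ℝ) : SignEq E φ φ := fun _ _ => rfl

@[symm] lemma symm (h : SignEq E φ ψ) : SignEq E ψ φ := fun f hf => (h f hf).symm

@[trans] lemma trans (h : SignEq E φ ψ) (h' : SignEq E ψ χ) : SignEq E φ χ :=
  fun f hf => (h f hf).trans (h' f hf)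

lemma mono (hEF : E ⊆ F) (h : SignEq F φ ψ) : SignEq E φ ψ := fun f hf => h f (hEF hf)

lemma eq_zero_iff (h : SignEq E φ ψ) {f : A} (hf : f ∈ E) : φ f = 0 ↔ ψ f = 0 := by
  rw [← sign_eq_zero_iff, h f hf, sign_eq_zero_iff]

end SignEq

lemma signType_mul_eq_zero_of_eq_neg_mul {σ α β : SignType} (hα : 0 ≤ α) (hβ : 0 ≤ β)
    (h : σ * α = -(σ * β)) : σ * α = 0 := by
  decide +revert

lemma signType_neg_ne_zero {σ : SignType} (h : σ ≠ 0) : -σ ≠ 0 := by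
  decide +revert

lemma signType_mul_neg_self {σ : SignType} (h : σ ≠ 0) : σ * -σ = -1 := by
  decide +revert

lemma signType_mul_self {σ : SignType} (h : σ ≠ 0) : σ * σ = 1 := by
  decide +revert

lemma sign_sub_congr {a b a' b' : ℝ} (ha : sign a = sign a') (hb : sign b = sign b')
    (hab : sign a ≠ sign b) : sign (b - a) = sign (b' - a') := by
  obtain h | h := hab.lt_or_gt
  · rw [sign_pos (sub_pos.2 (sign.monotone.reflect_lt h)),
      sign_pos (sub_pos.2 (sign.monotone.reflect_lt (ha ▸ hb ▸ h)))]
  · rw [sign_neg (sub_neg.2 (sign.monotone.reflect_lt h)),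
      sign_neg (sub_neg.2 (sign.monotone.reflect_lt (ha ▸ hb ▸ h)))]

lemma sign_sub_comm (a b : ℝ) : sign (a - b) = -sign (b - a) := by
  rw [← neg_sub, Left.sign_neg]

lemma mem_uIoo_of_sign_sub_eq {a b c : ℝ} (hca : sign (c - a) = sign (b - a))
    (hbc : sign (b - c) = sign (b - a)) (hab : a ≠ b) : c ∈ Set.uIoo a b := by
  obtain h | h := hab.lt_or_gt
  · rw [sign_pos (sub_pos.2 h), sign_eq_one_iff, sub_pos] at hca hbc
    exact Set.mem_uIoo_of_lt hca hbc
  · rw [sign_neg (sub_neg.2 h), sign_eq_neg_one_iff, sub_neg] at hca hbc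
    exact Set.mem_uIoo_of_gt hbc hca

lemma sign_sub_of_mem_uIoo {a b c : ℝ} (h : c ∈ Set.uIoo a b) :
    sign (c - a) = sign (b - a) ∧ sign (b - c) = sign (b - a) := by
  obtain hab | hab := le_total a b
  · rw [Set.uIoo_of_le hab] at h
    simp [sign_pos, h.1, h.2, h.1.trans h.2]
  · rw [Set.uIoo_of_ge hab] at h
    simp [sign_neg, h.1, h.2, h.1.trans h.2]

end Signs

section RealPolynomial

open Polynomial SignType Filter

variable {P : ℝ[X]} {σ : SignType} {u v : ℝ}

lemma sign_eval_sub_eval (h : ∀ c ∈ Set.uIoo u v, sign (P.derivative.eval c) = σ) :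
    sign (P.eval v - P.eval u) = σ * sign (v - u) := by
  wlog huv : u ≤ v generalizing u v
  · rw [sign_sub_comm, this (Set.uIoo_comm u v ▸ h) (le_of_not_ge huv), sign_sub_comm v, mul_neg]
  obtain rfl | huv := huv.eq_or_lt
  · simp
  · obtain ⟨c, hc, hslope⟩ := exists_hasDerivAt_eq_slope P.eval P.derivative.eval huv
      P.continuousOn fun c _ => P.hasDerivAt c
    rw [← h c (Set.Ioo_subset_uIoo hc), ← sign_mul, hslope,
      div_mul_cancel₀ _ (sub_pos.2 huv).ne']

lemma exists_sign_sub_eq_lt_abs_eval (hP : P.natDegree ≠ 0) {ε : SignType} (hε : ε ≠ 0)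
    (s M : ℝ) : ∃ v, sign (v - s) = ε ∧ M < |P.eval v| := by
  have hε' : (ε : ℝ) ≠ 0 := by cases ε <;> simp_all
  have hdeg : (P.comp (C (ε : ℝ) * X + C s)).natDegree ≠ 0 := by
    rwa [natDegree_comp, natDegree_linear hε', mul_one]
  obtain ⟨r, hM, hr⟩ := (((P.comp (C (ε : ℝ) * X + C s)).tendsto_norm_atTop
    (natDegree_pos_iff_degree_pos.1 (Nat.pos_of_ne_zero hdeg))
    tendsto_norm_atTop_atTop).eventually_gt_atTop M |>.and (eventually_gt_atTop 0)).exists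
  refine ⟨ε * r + s, ?_, by simpa using hM⟩
  rw [add_sub_cancel_right, sign_mul, sign_pos hr, mul_one]
  cases ε <;> simp

end RealPolynomial

section Cells

open Polynomial SignType

variable {R : Type*} [CommRing R] {E : Finset R[X]} {x y : R →+* ℝ} {φ : R[X] →+* ℝ} {t u v : ℝ}

/-- The points of the line above `x` at which the family `E` has the same signs as at `φ`. -/
def cell (E : Finset R[X]) (x : R →+* ℝ) (φ : R[X] →+* ℝ) : Set ℝ :=
  {t | SignEq E (eval₂RingHom x t) φ}

lemma mem_cell_self : t ∈ cell E x (eval₂RingHom x t) := SignEq.refl _ _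

/-- A finite family of polynomials containing the derivatives of its nonconstant members. -/
def IsDerivativeClosed (E : Finset R[X]) : Prop :=
  ∀ f ∈ E, f.natDegree ≠ 0 → derivative f ∈ E

lemma IsReductionClosed.isDerivativeClosed (hE : IsReductionClosed E) : IsDerivativeClosed E :=
  hE.derivative_mem

lemma sign_eval₂_sub_eval₂_of_derivative {f : R[X]} {σ : SignType}
    (h : ∀ c ∈ Set.uIoo u v, sign (f.derivative.eval₂ x c) = σ) :
    sign (f.eval₂ x v - f.eval₂ x u) = σ * sign (v - u) := by
  simp only [← eval_map, ← derivative_map] at h ⊢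
  exact sign_eval_sub_eval h

/-- Thom's lemma. -/
lemma IsDerivativeClosed.ordConnected_cell (hE : IsDerivativeClosed E) :
    (cell E x φ).OrdConnected := by
  refine ⟨fun u hu v hv w hw f hf => ?_⟩
  induction hn : f.natDegree using Nat.strong_induction_on generalizing f w with
  | _ n ih =>
    by_cases hf0 : f.natDegree = 0
    · have h := hu f hf
      rw [eq_C_of_natDegree_eq_zero hf0] at h ⊢
      simpa using h
    have hder : ∀ c ∈ Set.Icc u v, sign (f.derivative.eval₂ x c) = sign (φ (derivative f)) :=
      fun c hc => ih _ (hn ▸ natDegree_derivative_lt hf0) _ hc _ (hE f hf hf0) rfl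
    have huw := sign_eval₂_sub_eval₂_of_derivative fun c hc => hder c <|
      Set.Ioo_subset_Icc_self (Set.Ioo_subset_Ioo_right hw.2 (Set.uIoo_of_le hw.1 ▸ hc))
    have hwv := sign_eval₂_sub_eval₂_of_derivative fun c hc => hder c <|
      Set.Ioo_subset_Icc_self (Set.Ioo_subset_Ioo_left hw.1 (Set.uIoo_of_le hw.2 ▸ hc))
    have hends : sign (f.eval₂ x v) = sign (f.eval₂ x u) := (hv f hf).trans (hu f hf).symm
    suffices sign (f.eval₂ x w) = sign (f.eval₂ x u) from this.trans (hu f hf)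
    by_contra hne
    have hsub := sign_sub_congr hends.symm rfl (Ne.symm hne)
    rw [sign_sub_comm _ (f.eval₂ x v), huw, hwv] at hsub
    have hzero : sign (φ (derivative f)) * sign (w - u) = 0 := by
      have hwu_nonneg := sign_nonneg_iff.2 (sub_nonneg.2 hw.1)
      have hvw_nonneg := sign_nonneg_iff.2 (sub_nonneg.2 hw.2)
      exact signType_mul_eq_zero_of_eq_neg_mul hwu_nonneg hvw_nonneg hsub
    rw [hzero, sign_eq_zero_iff, sub_eq_zero] at huw
    exact hne (by rw [huw])

lemma IsDerivativeClosed.filter_natDegree_lt (hE : IsDerivativeClosed E) (n : ℕ) :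
    IsDerivativeClosed {f ∈ E | f.natDegree < n} := by
  intro f hf hf0
  obtain ⟨hfE, hfn⟩ := Finset.mem_filter.1 hf
  exact Finset.mem_filter.2 ⟨hE f hfE hf0, (natDegree_derivative_lt hf0).trans hfn⟩

lemma IsDerivativeClosed.sign_eval₂_sub_eval₂ (hE : IsDerivativeClosed E) {f : R[X]}
    (hf : f ∈ E) (hf0 : f.natDegree ≠ 0)
    (huv : SignEq {g ∈ E | g.natDegree < f.natDegree} (eval₂RingHom x u) (eval₂RingHom x v)) :
    sign (f.eval₂ x v - f.eval₂ x u) = sign (f.derivative.eval₂ x u) * sign (v - u) := by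
  have hder : derivative f ∈ {g ∈ E | g.natDegree < f.natDegree} :=
    Finset.mem_filter.2 ⟨hE f hf hf0, natDegree_derivative_lt hf0⟩
  exact sign_eval₂_sub_eval₂_of_derivative fun c hc =>
    (hE.filter_natDegree_lt _).ordConnected_cell.uIcc_subset mem_cell_self huv.symm
      (Set.uIoo_subset_uIcc_self hc) _ hder

lemma IsDerivativeClosed.sign_sub_eq_sign_sub (hE : IsDerivativeClosed E) {u' v' : ℝ}
    (hu : SignEq E (eval₂RingHom x u) (eval₂RingHom y v))
    (hu' : SignEq E (eval₂RingHom x u') (eval₂RingHom y v'))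
    (hne : ¬ SignEq E (eval₂RingHom x u) (eval₂RingHom x u')) :
    sign (u' - u) = sign (v' - v) := by
  have hexists : ∃ n, ∃ f ∈ E, f.natDegree = n ∧ sign (f.eval₂ x u) ≠ sign (f.eval₂ x u') := by
    simpa [SignEq] using hne
  classical
  obtain ⟨f, hf, hfn, hsign⟩ := Nat.find_spec hexists
  have hf0 : f.natDegree ≠ 0 := by
    intro h0
    rw [eq_C_of_natDegree_eq_zero h0] at hsign
    simp at hsign
  have hlow_x : SignEq {g ∈ E | g.natDegree < f.natDegree}
      (eval₂RingHom x u) (eval₂RingHom x u') := by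
    intro g hg
    obtain ⟨hgE, hgf⟩ := Finset.mem_filter.1 hg
    by_contra hg
    exact Nat.find_min hexists (hfn ▸ hgf) ⟨g, hgE, rfl, hg⟩
  have hlow_y := ((hu.mono (Finset.filter_subset _ E)).symm.trans hlow_x).trans
    (hu'.mono (Finset.filter_subset _ E))
  have hder_eq : sign (f.derivative.eval₂ x u) = sign (f.derivative.eval₂ y v) :=
    hu _ (hE f hf hf0)
  have hsub_eq : sign (f.eval₂ x u' - f.eval₂ x u) = sign (f.eval₂ y v' - f.eval₂ y v) :=
    sign_sub_congr (hu f hf) (hu' f hf) hsign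
  have hsub_ne : sign (f.eval₂ x u' - f.eval₂ x u) ≠ 0 := by
    rw [sign_ne_zero, sub_ne_zero]
    exact fun h => hsign (by rw [h])
  rw [hE.sign_eval₂_sub_eval₂ hf hf0 hlow_x] at hsub_eq hsub_ne
  rw [hE.sign_eval₂_sub_eval₂ hf hf0 hlow_y, ← hder_eq] at hsub_eq
  exact mul_left_cancel₀ (left_ne_zero_of_mul hsub_ne) hsub_eq

end Cells

section Breakpoints

open Polynomial SignType Filter Topology

variable {R : Type*} [CommRing R] {E : Finset R[X]} {x y : R →+* ℝ} {φ : R[X] →+* ℝ} {s t : ℝ}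

/-- A breakpoint of `E` above `x` is a zero of a member of `E` whose leading coefficient does not
vanish at `x`; between breakpoints the family `E` has constant signs. -/
def IsBreakpoint (E : Finset R[X]) (x : R →+* ℝ) (t : ℝ) : Prop :=
  ∃ g ∈ E, x g.leadingCoeff ≠ 0 ∧ g.eval₂ x t = 0

lemma map_eraseLead_of_leadingCoeff {f : R[X]} (hf : x f.leadingCoeff = 0) :
    f.eraseLead.map x = f.map x := by
  conv_rhs => rw [← f.eraseLead_add_monomial_natDegree_leadingCoeff, Polynomial.map_add,
    map_monomial, hf, monomial_zero_right, add_zero]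

lemma IsReductionClosed.isBreakpoint_of_eval₂_eq_zero (hE : IsReductionClosed E) {f : R[X]}
    (hf : f ∈ E) (hmap : f.map x ≠ 0) (ht : f.eval₂ x t = 0) : IsBreakpoint E x t := by
  induction hn : f.natDegree using Nat.strong_induction_on generalizing f with
  | _ n ih =>
    by_cases hlead : x f.leadingCoeff = 0
    · have hf0 : f.natDegree ≠ 0 := fun h0 => hmap <| by
        rw [leadingCoeff, h0] at hlead
        rw [eq_C_of_natDegree_eq_zero h0, map_C, hlead, C_0]
      have herase := map_eraseLead_of_leadingCoeff hlead
      exact ih _ (hn ▸ natDegree_eraseLead_lt_of_ne_zero hf0) (hE.eraseLead_mem f hf hf0)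
        (herase ▸ hmap) (by rwa [← eval_map, herase, eval_map]) rfl
    · exact ⟨f, hf, hlead, ht⟩

lemma eventually_sign_eval₂_eq {f : R[X]} (h : f.map x = 0 ∨ f.eval₂ x t ≠ 0) :
    ∀ᶠ s in 𝓝 t, sign (f.eval₂ x s) = sign (f.eval₂ x t) := by
  obtain h | h := h
  · simp [← eval_map, h]
  · simp only [← eval_map] at h ⊢
    have hcont : ContinuousAt (fun s => sign ((f.map x).eval s)) t :=
      (continuousAt_sign_of_ne_zero h).tendsto.comp (f.map x).continuousAt
    exact hcont.eventually_mem (mem_nhds_discrete.2 (Set.mem_singleton _))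

lemma IsReductionClosed.eventually_signEq (hE : IsReductionClosed E)
    (ht : ¬ IsBreakpoint E x t) :
    ∀ᶠ s in 𝓝 t, SignEq E (eval₂RingHom x s) (eval₂RingHom x t) := by
  refine (eventually_all_finset E).2 fun f hf => eventually_sign_eval₂_eq ?_
  by_contra! h
  exact ht (hE.isBreakpoint_of_eval₂_eq_zero hf h.1 h.2)

lemma IsReductionClosed.cell_mem_nhds (hE : IsReductionClosed E) (ht : ¬ IsBreakpoint E x t)
    (htφ : t ∈ cell E x φ) : cell E x φ ∈ 𝓝 t :=
  (hE.eventually_signEq ht).mono fun _ hs => hs.trans htφ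

lemma IsReductionClosed.isBreakpoint_of_mem_frontier (hE : IsReductionClosed E)
    (ht : t ∈ frontier (cell E x φ)) : IsBreakpoint E x t := by
  by_contra hbreak
  obtain ⟨s, hsφ, hst⟩ := ((mem_closure_iff_frequently.1 ht.1).and_eventually
    (hE.eventually_signEq hbreak)).exists
  exact ht.2 (mem_interior_iff_mem_nhds.2 (hE.cell_mem_nhds hbreak (hst.symm.trans hsφ)))

lemma IsBreakpoint.of_signEq (hlead : ∀ f ∈ E, sign (x f.leadingCoeff) = sign (y f.leadingCoeff))
    (hts : SignEq E (eval₂RingHom x t) (eval₂RingHom y s)) (ht : IsBreakpoint E x t) :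
    IsBreakpoint E y s := by
  obtain ⟨g, hg, hgx, hgt⟩ := ht
  refine ⟨g, hg, ?_, (hts.eq_zero_iff hg).1 hgt⟩
  rwa [← sign_ne_zero, ← hlead g hg, sign_ne_zero]

lemma IsBreakpoint.eq_of_signEq (ht : IsBreakpoint E x t) (hE : IsDerivativeClosed E)
    (hst : SignEq E (eval₂RingHom x s) (eval₂RingHom x t)) : s = t := by
  obtain ⟨g, hg, hgx, hgt⟩ := ht
  by_contra hne
  have hroots : Set.uIcc s t ⊆ {c | (g.map x).IsRoot c} := fun c hc =>
    (eval_map _ _).trans <| (SignEq.eq_zero_iff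
      (hE.ordConnected_cell.uIcc_subset hst mem_cell_self hc) hg).2 hgt
  have hmap : g.map x = 0 :=
    eq_zero_of_infinite_isRoot _ ((Set.Icc_infinite (inf_lt_sup.2 hne)).mono hroots)
  exact hgx (by simpa using congr_arg (coeff · g.natDegree) hmap)

lemma IsPseudoRemainder.sign_eval₂_eq {f p r : R[X]} (h : IsPseudoRemainder f p r)
    (hlead : x f.leadingCoeff ≠ 0) (ht : f.eval₂ x t = 0) :
    sign (p.eval₂ x t) = sign (r.eval₂ x t) := by
  obtain ⟨-, k, q, hq⟩ := h
  have heval : x f.leadingCoeff ^ (2 * k) * p.eval₂ x t = r.eval₂ x t := by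
    simpa [ht, sub_eq_zero, eval₂_pow] using congr_arg (eval₂ x t) hq
  rw [← heval, sign_mul, sign_pos ((even_two_mul k).pow_pos hlead), one_mul]

lemma IsBreakpoint.sign_eval₂_eq {p : R[X]} (ht : IsBreakpoint E x t)
    (hrem : ∀ f ∈ E, f.natDegree ≠ 0 → ∃ r ∈ E, IsPseudoRemainder f p r)
    (hlead : ∀ f ∈ E, sign (x f.leadingCoeff) = sign (y f.leadingCoeff))
    (hts : SignEq E (eval₂RingHom x t) (eval₂RingHom y s)) :
    sign (p.eval₂ x t) = sign (p.eval₂ y s) := by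
  obtain ⟨f, hf, hfx, hft⟩ := ht
  have hf0 : f.natDegree ≠ 0 := fun h0 => hfx <| by
    rw [eq_C_of_natDegree_eq_zero h0] at hft ⊢
    simpa using hft
  have hfy : y f.leadingCoeff ≠ 0 := by rwa [← sign_ne_zero, ← hlead f hf, sign_ne_zero]
  obtain ⟨r, hr, hfr⟩ := hrem f hf hf0
  rw [hfr.sign_eval₂_eq hfx hft, hfr.sign_eval₂_eq hfy ((hts.eq_zero_iff hf).1 hft)]
  exact hts r hr

end Breakpoints

section Correspondence

open Polynomial SignType Topology

lemma exists_mem_frontier_uIoo_subset {J : Set ℝ} (hJ : J.OrdConnected) {s v : ℝ}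
    (hs : J ∈ 𝓝 s) (hv : v ∉ J) :
    ∃ w ∈ frontier J, sign (w - s) = sign (v - s) ∧ Set.uIoo s w ⊆ J := by
  have hsJ : s ∈ interior J := mem_interior_iff_mem_nhds.2 hs
  obtain ⟨w, ⟨hwJ, hwsv⟩, hw⟩ : ∃ w ∈ closure (interior J) ∩ Set.uIcc s v, w ∉ interior J := by
    by_contra! hsub
    exact hv <| interior_subset <| isPreconnected_uIcc.subset_of_closure_inter_subset
      isOpen_interior ⟨s, Set.left_mem_uIcc, hsJ⟩ hsub Set.right_mem_uIcc
  have hwcl : w ∈ closure J := closure_mono interior_subset hwJ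
  have hws : w ≠ s := fun h => hw (h ▸ hsJ)
  refine ⟨w, ⟨hwcl, hw⟩, ?_, ?_⟩
  · obtain hsv | hsv := le_total s v
    · rw [Set.uIcc_of_le hsv] at hwsv
      have hsw := hwsv.1.lt_of_ne' hws
      rw [sign_pos (sub_pos.2 hsw), sign_pos (sub_pos.2 (hsw.trans_le hwsv.2))]
    · rw [Set.uIcc_of_ge hsv] at hwsv
      have hsw := hwsv.2.lt_of_ne hws
      rw [sign_neg (sub_neg.2 hsw), sign_neg (sub_neg.2 (hwsv.1.trans_lt hsw))]
  · rw [Set.uIoo, ← openSegment_eq_Ioo' hws.symm]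
    exact (hJ.convex.openSegment_interior_closure_subset_interior hsJ hwcl).trans interior_subset

variable {R : Type*} [CommRing R] {E : Finset R[X]} {x y : R →+* ℝ} {φ : R[X] →+* ℝ}
  {p : R[X]} {σ : SignType} {s t w : ℝ}

/-- The family `E` has the same leading coefficient signs and realizes the same sign conditions on
the lines above `x` and above `y`. -/
structure SignCorrespondence (E : Finset R[X]) (x y : R →+* ℝ) : Prop where
  sign_leadingCoeff_eq : ∀ f ∈ E, sign (x f.leadingCoeff) = sign (y f.leadingCoeff)
  forth : ∀ t, ∃ s, SignEq E (eval₂RingHom x t) (eval₂RingHom y s)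
  back : ∀ s, ∃ t, SignEq E (eval₂RingHom x t) (eval₂RingHom y s)

namespace SignCorrespondence

lemma symm (h : SignCorrespondence E x y) : SignCorrespondence E y x where
  sign_leadingCoeff_eq f hf := (h.sign_leadingCoeff_eq f hf).symm
  forth t := (h.back t).imp fun _ => SignEq.symm
  back s := (h.forth s).imp fun _ => SignEq.symm

lemma isBreakpoint_iff (h : SignCorrespondence E x y)
    (hts : SignEq E (eval₂RingHom x t) (eval₂RingHom y s)) :
    IsBreakpoint E x t ↔ IsBreakpoint E y s :=
  ⟨.of_signEq h.sign_leadingCoeff_eq hts, .of_signEq h.symm.sign_leadingCoeff_eq hts.symm⟩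

lemma exists_adjacent (h : SignCorrespondence E x y) (hE : IsDerivativeClosed E)
    (ht : t ∈ cell E x φ) (hs : s ∈ cell E y φ) (hs_break : ¬ IsBreakpoint E y s)
    (hw : IsBreakpoint E y w) (hsw : Set.uIoo s w ⊆ cell E y φ) :
    ∃ z, SignEq E (eval₂RingHom x z) (eval₂RingHom y w) ∧ sign (z - t) = sign (w - s) ∧
      Set.uIoo t z ⊆ cell E x φ := by
  have hts : SignEq E (eval₂RingHom x t) (eval₂RingHom y s) := ht.trans hs.symm
  obtain ⟨z, hzw⟩ := h.back w
  have hz : IsBreakpoint E x z := (h.isBreakpoint_iff hzw).2 hw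
  have ht_break : ¬ IsBreakpoint E x t := (h.isBreakpoint_iff hts).not.2 hs_break
  have htz : ¬ SignEq E (eval₂RingHom x t) (eval₂RingHom x z) := fun htz =>
    ht_break (hz.eq_of_signEq hE htz ▸ hz)
  have hsign : sign (z - t) = sign (w - s) := hE.sign_sub_eq_sign_sub hts hzw htz
  refine ⟨z, hzw, hsign, fun c hc => ?_⟩
  by_contra hcφ
  obtain ⟨c', hcc'⟩ := h.forth c
  have hcz : ¬ SignEq E (eval₂RingHom x c) (eval₂RingHom x z) := fun hcz =>
    Set.right_notMem_uIoo (hz.eq_of_signEq hE hcz ▸ hc)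
  have hleft : sign (c - t) = sign (c' - s) :=
    hE.sign_sub_eq_sign_sub hts hcc' fun htc => hcφ (htc.symm.trans ht)
  have hright : sign (z - c) = sign (w - c') := hE.sign_sub_eq_sign_sub hcc' hzw hcz
  obtain ⟨hct_sign, hzc_sign⟩ := sign_sub_of_mem_uIoo hc
  have hc' : c' ∈ Set.uIoo s w := mem_uIoo_of_sign_sub_eq
    (hleft ▸ hsign ▸ hct_sign) (hright ▸ hsign ▸ hzc_sign) (fun hsw => hs_break (hsw ▸ hw))
  exact hcφ (hcc'.trans (hsw hc'))

end SignCorrespondence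

lemma exists_notMem_cell_of_nonneg (hE : IsDerivativeClosed E) (hpy : (p.map y).natDegree ≠ 0)
    (hσ : σ ≠ 0) (hs : s ∈ cell E y φ)
    (hder : ∀ c ∈ cell E y φ, sign (p.derivative.eval₂ y c) = σ)
    (hnonneg : ∀ v ∈ cell E y φ, 0 ≤ p.eval₂ y v) :
    ∃ v ∉ cell E y φ, sign (v - s) = -σ := by
  obtain ⟨v, hvs, hv⟩ :=
    exists_sign_sub_eq_lt_abs_eval hpy (signType_neg_ne_zero hσ) s (p.eval₂ y s)
  rw [eval_map] at hv
  refine ⟨v, fun hvφ => ?_, hvs⟩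
  have hsub := sign_eval₂_sub_eval₂_of_derivative fun c hc =>
    hder c (hE.ordConnected_cell.uIcc_subset hs hvφ (Set.uIoo_subset_uIcc_self hc))
  rw [hvs, signType_mul_neg_self hσ, sign_eq_neg_one_iff, sub_neg] at hsub
  rw [abs_of_nonneg (hnonneg v hvφ)] at hv
  exact hv.not_gt hsub

/-- The sign of the derivative of `p` is constant on two corresponding cells, which are not
breakpoints, and `p` has the same sign at corresponding breakpoints. -/
structure MonotoneOnCells (E : Finset R[X]) (x y : R →+* ℝ) (φ : R[X] →+* ℝ) (p : R[X])
    (σ : SignType) : Prop where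
  ne_zero : σ ≠ 0
  natDegree_ne_zero : (p.map y).natDegree ≠ 0
  sign_derivative_left : ∀ c ∈ cell E x φ, sign (p.derivative.eval₂ x c) = σ
  sign_derivative_right : ∀ c ∈ cell E y φ, sign (p.derivative.eval₂ y c) = σ
  not_isBreakpoint : ∀ c ∈ cell E x φ, ¬ IsBreakpoint E x c
  sign_eq_of_isBreakpoint : ∀ z w, IsBreakpoint E x z →
    SignEq E (eval₂RingHom x z) (eval₂RingHom y w) → sign (p.eval₂ x z) = sign (p.eval₂ y w)

lemma MonotoneOnCells.neg (hp : MonotoneOnCells E x y φ p σ) :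
    MonotoneOnCells E x y φ (-p) (-σ) where
  ne_zero := signType_neg_ne_zero hp.ne_zero
  natDegree_ne_zero := by simpa using hp.natDegree_ne_zero
  sign_derivative_left c hc := by
    simpa [Left.sign_neg] using hp.sign_derivative_left c hc
  sign_derivative_right c hc := by
    simpa [Left.sign_neg] using hp.sign_derivative_right c hc
  not_isBreakpoint := hp.not_isBreakpoint
  sign_eq_of_isBreakpoint z w hz hzw := by
    simpa [Left.sign_neg] using hp.sign_eq_of_isBreakpoint z w hz hzw

lemma exists_mem_sign_sub_eq {J : Set ℝ} (hJ : J ∈ 𝓝 t) (ε : SignType) :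
    ∃ u ∈ J, sign (u - t) = ε := by
  cases ε with
  | zero => exact ⟨t, mem_of_mem_nhds hJ, by simp⟩
  | neg =>
    obtain ⟨u, hu, hut⟩ := ((eventually_nhdsWithin_of_eventually_nhds hJ).and
      (self_mem_nhdsWithin (s := Set.Iio t))).exists
    exact ⟨u, hu, sign_neg (sub_neg.2 hut)⟩
  | pos =>
    obtain ⟨u, hu, hut⟩ := ((eventually_nhdsWithin_of_eventually_nhds hJ).and
      (self_mem_nhdsWithin (s := Set.Ioi t))).exists
    exact ⟨u, hu, sign_pos (sub_pos.2 hut)⟩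

lemma MonotoneOnCells.exists_sign_eval₂_eq_mul (hp : MonotoneOnCells E x y φ p σ)
    (hE : IsReductionClosed E) (ht : t ∈ cell E x φ) (hpt : p.eval₂ x t = 0) (ε : SignType) :
    ∃ u ∈ cell E x φ, sign (p.eval₂ x u) = σ * ε := by
  obtain ⟨u, hu, hut⟩ :=
    exists_mem_sign_sub_eq (hE.cell_mem_nhds (hp.not_isBreakpoint t ht) ht) ε
  refine ⟨u, hu, ?_⟩
  rw [← hut, ← sub_zero (p.eval₂ x u), ← hpt]
  exact sign_eval₂_sub_eval₂_of_derivative fun c hc => hp.sign_derivative_left c <|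
    hE.isDerivativeClosed.ordConnected_cell.uIcc_subset ht hu (Set.uIoo_subset_uIcc_self hc)

namespace SignCorrespondence

variable (h : SignCorrespondence E x y) (hE : IsReductionClosed E)
  (hp : MonotoneOnCells E x y φ p σ)
include h hE hp

lemma exists_eval₂_neg (ht : t ∈ cell E x φ) (hs : s ∈ cell E y φ) (hpt : p.eval₂ x t < 0) :
    ∃ v ∈ cell E y φ, p.eval₂ y v < 0 := by
  by_contra! hnonneg
  have hs_break : ¬ IsBreakpoint E y s :=
    (h.isBreakpoint_iff (ht.trans hs.symm)).not.1 (hp.not_isBreakpoint t ht)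
  obtain ⟨v, hv, hvs⟩ := exists_notMem_cell_of_nonneg hE.isDerivativeClosed hp.natDegree_ne_zero
    hp.ne_zero hs hp.sign_derivative_right hnonneg
  obtain ⟨w, hw, hws, hsw⟩ := exists_mem_frontier_uIoo_subset
    hE.isDerivativeClosed.ordConnected_cell (hE.cell_mem_nhds hs_break hs) hv
  have hw_break := hE.isBreakpoint_of_mem_frontier hw
  obtain ⟨z, hzw, hzt, htz⟩ :=
    h.exists_adjacent hE.isDerivativeClosed ht hs hs_break hw_break hsw
  have hpw : 0 ≤ p.eval₂ y w := by
    have hclosed : IsClosed {c | 0 ≤ p.eval₂ y c} := by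
      simpa only [← eval_map] using isClosed_le continuous_const (p.map y).continuous
    exact closure_minimal hnonneg hclosed hw.1
  have hpz : 0 ≤ p.eval₂ x z := by
    rwa [← sign_nonneg_iff, hp.sign_eq_of_isBreakpoint z w ((h.isBreakpoint_iff hzw).2 hw_break)
      hzw, sign_nonneg_iff]
  have hpzt : p.eval₂ x z < p.eval₂ x t := by
    have hsub := sign_eval₂_sub_eval₂_of_derivative fun c hc =>
      hp.sign_derivative_left c (htz hc)
    rwa [hzt, hws, hvs, signType_mul_neg_self hp.ne_zero, sign_eq_neg_one_iff, sub_neg] at hsub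
  exact (hpzt.trans hpt).not_ge hpz

lemma exists_eval₂_pos (ht : t ∈ cell E x φ) (hs : s ∈ cell E y φ) (hpt : 0 < p.eval₂ x t) :
    ∃ v ∈ cell E y φ, 0 < p.eval₂ y v := by
  simpa using h.exists_eval₂_neg hE hp.neg ht hs (by simpa using hpt)

lemma exists_sign_eval₂_eq (ht : t ∈ cell E x φ) (hs : s ∈ cell E y φ) :
    ∃ v ∈ cell E y φ, sign (p.eval₂ x t) = sign (p.eval₂ y v) := by
  obtain hpt | hpt | hpt := lt_trichotomy (p.eval₂ x t) 0
  · obtain ⟨v, hv, hpv⟩ := h.exists_eval₂_neg hE hp ht hs hpt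
    exact ⟨v, hv, by rw [sign_neg hpt, sign_neg hpv]⟩
  · obtain ⟨u₁, hu₁, hpu₁⟩ := hp.exists_sign_eval₂_eq_mul hE ht hpt (-σ)
    obtain ⟨u₂, hu₂, hpu₂⟩ := hp.exists_sign_eval₂_eq_mul hE ht hpt σ
    rw [signType_mul_neg_self hp.ne_zero, sign_eq_neg_one_iff] at hpu₁
    rw [signType_mul_self hp.ne_zero, sign_eq_one_iff] at hpu₂
    obtain ⟨v₁, hv₁, hpv₁⟩ := h.exists_eval₂_neg hE hp hu₁ hs hpu₁
    obtain ⟨v₂, hv₂, hpv₂⟩ := h.exists_eval₂_pos hE hp hu₂ hs hpu₂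
    have hcont : Continuous fun v => p.eval₂ y v := by
      simpa only [← eval_map] using (p.map y).continuous
    obtain ⟨v, hv, hpv⟩ := hE.isDerivativeClosed.ordConnected_cell.isPreconnected.intermediate_value
      hv₁ hv₂ hcont.continuousOn ⟨hpv₁.le, hpv₂.le⟩
    exact ⟨v, hv, congr_arg sign (hpt.trans hpv.symm)⟩
  · obtain ⟨v, hv, hpv⟩ := h.exists_eval₂_pos hE hp ht hs hpt
    exact ⟨v, hv, by rw [sign_pos hpt, sign_pos hpv]⟩

end SignCorrespondence

end Correspondence

section LeadingCoefficients

open Polynomial SignType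

variable {R : Type*} [CommRing R] {E : Finset R[X]} {x y : R →+* ℝ} {p : R[X]} {s t : ℝ}

lemma IsReductionClosed.eval₂_derivative_ne_zero (hE : IsReductionClosed E)
    (hp : derivative p ∈ E) (hmap : (p.map x).natDegree ≠ 0) (ht : ¬ IsBreakpoint E x t) :
    p.derivative.eval₂ x t ≠ 0 := by
  refine fun hzero => ht (hE.isBreakpoint_of_eval₂_eq_zero hp ?_ hzero)
  rw [← derivative_map]
  exact mt derivative_eq_zero.1 hmap

lemma SignCorrespondence.exists_sign_eval₂_eq_of_erase (h : SignCorrespondence E x y)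
    (hE : IsReductionClosed E) (hder : derivative p ∈ E)
    (hrem : ∀ f ∈ E, f.natDegree ≠ 0 → ∃ r ∈ E, IsPseudoRemainder f p r)
    (hpx : (p.map x).natDegree ≠ 0) (hpy : (p.map y).natDegree ≠ 0)
    (hts : SignEq E (eval₂RingHom x t) (eval₂RingHom y s)) :
    ∃ v, SignEq E (eval₂RingHom x t) (eval₂RingHom y v) ∧
      sign (p.eval₂ x t) = sign (p.eval₂ y v) := by
  have hbreak : ∀ z w, IsBreakpoint E x z → SignEq E (eval₂RingHom x z) (eval₂RingHom y w) →
      sign (p.eval₂ x z) = sign (p.eval₂ y w) := fun _ _ hz hzw =>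
    hz.sign_eval₂_eq hrem h.sign_leadingCoeff_eq hzw
  by_cases ht : IsBreakpoint E x t
  · exact ⟨s, hts, hbreak t s ht hts⟩
  have hmono : MonotoneOnCells E x y (eval₂RingHom x t) p (sign (p.derivative.eval₂ x t)) :=
    { ne_zero := sign_ne_zero.2 (hE.eval₂_derivative_ne_zero hder hpx ht)
      natDegree_ne_zero := hpy
      sign_derivative_left c hc := hc _ hder
      sign_derivative_right c hc := hc _ hder
      not_isBreakpoint c hc := fun hc_break =>
        ht (.of_signEq (fun _ _ => rfl) hc hc_break)
      sign_eq_of_isBreakpoint := hbreak }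
  obtain ⟨v, hv, hpv⟩ := h.exists_sign_eval₂_eq hE hmono mem_cell_self hts.symm
  exact ⟨v, hv.symm, hpv⟩

lemma SignCorrespondence.exists_signEq_of_erase [DecidableEq R[X]]
    (h : SignCorrespondence (E.erase p) x y) (hE : IsReductionClosed E) (hp : p ∈ E)
    (hmax : ∀ f ∈ E, f.natDegree ≤ p.natDegree)
    (hlead : sign (x p.leadingCoeff) = sign (y p.leadingCoeff)) (t : ℝ) :
    ∃ s, SignEq E (eval₂RingHom x t) (eval₂RingHom y s) := by
  have hE' := hE.erase hmax
  have mem_erase_of_lt {r : R[X]} (hr : r ∈ E) (hrp : r.natDegree < p.natDegree) : r ∈ E.erase p :=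
    Finset.mem_erase.2 ⟨ne_of_apply_ne natDegree hrp.ne, hr⟩
  suffices hs : ∃ s, SignEq (E.erase p) (eval₂RingHom x t) (eval₂RingHom y s) ∧
      sign (p.eval₂ x t) = sign (p.eval₂ y s) by
    obtain ⟨s, hts, hps⟩ := hs
    rw [← Finset.insert_erase hp]
    exact ⟨s, Finset.forall_mem_insert _ _ _ |>.2 ⟨hps, hts⟩⟩
  obtain ⟨s, hts⟩ := h.forth t
  by_cases hp0 : p.natDegree = 0
  · obtain ⟨a, rfl⟩ := natDegree_eq_zero.1 hp0
    exact ⟨s, hts, by simpa only [eval₂_C, leadingCoeff_C] using hlead⟩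
  by_cases hx : x p.leadingCoeff = 0
  · have hy : y p.leadingCoeff = 0 := by
      rwa [← sign_eq_zero_iff, ← hlead, sign_eq_zero_iff]
    refine ⟨s, hts, ?_⟩
    rw [← eval_map, ← eval_map, ← map_eraseLead_of_leadingCoeff hx,
      ← map_eraseLead_of_leadingCoeff hy, eval_map, eval_map]
    exact hts _ (mem_erase_of_lt (hE.eraseLead_mem p hp hp0)
      (natDegree_eraseLead_lt_of_ne_zero hp0))
  · have hy : y p.leadingCoeff ≠ 0 := by
      rwa [← sign_ne_zero, ← hlead, sign_ne_zero]
    refine h.exists_sign_eval₂_eq_of_erase hE'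
      (mem_erase_of_lt (hE.derivative_mem p hp hp0) (natDegree_derivative_lt hp0))
      (fun f hf hf0 => ?_)
      (by rwa [natDegree_map_of_leadingCoeff_ne_zero _ hx])
      (by rwa [natDegree_map_of_leadingCoeff_ne_zero _ hy]) hts
    have hfE := Finset.mem_of_mem_erase hf
    obtain ⟨r, hr, hrem⟩ := hE.exists_isPseudoRemainder_mem f hfE p hp hf0
    exact ⟨r, mem_erase_of_lt hr (hrem.1.trans_le (hmax f hfE)), hrem⟩

theorem IsReductionClosed.signCorrespondence (hE : IsReductionClosed E)
    (hlead : ∀ f ∈ E, sign (x f.leadingCoeff) = sign (y f.leadingCoeff)) :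
    SignCorrespondence E x y := by
  classical
  induction E using Finset.strongInduction with
  | _ E ih =>
    obtain rfl | hne := E.eq_empty_or_nonempty
    · exact ⟨hlead, fun _ => ⟨0, by simp [SignEq]⟩, fun _ => ⟨0, by simp [SignEq]⟩⟩
    obtain ⟨p, hp, hmax⟩ := E.exists_max_image natDegree hne
    have h := ih _ (Finset.erase_ssubset hp) (hE.erase hmax) fun f hf =>
      hlead f (Finset.mem_of_mem_erase hf)
    exact ⟨hlead, h.exists_signEq_of_erase hE hp hmax (hlead p hp), fun s =>
      (h.symm.exists_signEq_of_erase hE hp hmax (hlead p hp).symm s).imp fun _ => SignEq.symm⟩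

end LeadingCoefficients

section Elimination

open SignType

variable {R A B : Type*} [CommRing R] [CommRing A] [CommRing B]

/-- Elimination of the variables of `A` over `R`: the sign conditions that finitely many members of
`A` satisfy at some real point above a given real point of `R` are determined by the signs of
finitely many members of `R`. -/
def HasSignElimination (f : R →+* A) : Prop :=
  ∀ F : Finset A, ∃ G : Finset R, ∀ (φ : A →+* ℝ) (y : R →+* ℝ), SignEq G (φ.comp f) y →
    ∃ ψ : A →+* ℝ, ψ.comp f = y ∧ SignEq F φ ψ

lemma signEq_image_iff [DecidableEq A] (f : R →+* A) (F : Finset R) (φ ψ : A →+* ℝ) :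
    SignEq (F.image f) φ ψ ↔ SignEq F (φ.comp f) (ψ.comp f) := by
  simp [SignEq]

lemma hasSignElimination_ringEquiv (e : R ≃+* A) : HasSignElimination (e : R →+* A) := by
  classical
  refine fun F => ⟨F.image e.symm, fun φ y h => ⟨y.comp e.symm, by ext; simp, fun f hf => ?_⟩⟩
  simpa using h _ (Finset.mem_image_of_mem _ hf)

lemma HasSignElimination.comp {g : A →+* B} {f : R →+* A} (hg : HasSignElimination g)
    (hf : HasSignElimination f) : HasSignElimination (g.comp f) := by
  intro F
  obtain ⟨G, hG⟩ := hg F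
  obtain ⟨H, hH⟩ := hf G
  refine ⟨H, fun φ y hφy => ?_⟩
  obtain ⟨χ, rfl, hφχ⟩ := hH (φ.comp g) y hφy
  obtain ⟨ψ, rfl, hφψ⟩ := hG φ χ hφχ
  exact ⟨ψ, rfl, hφψ⟩

theorem hasSignElimination_polynomial : HasSignElimination (Polynomial.C : R →+* Polynomial R) := by
  classical
  intro F
  obtain ⟨E, hFE, hE⟩ := exists_isReductionClosed F
  refine ⟨E.image Polynomial.leadingCoeff, fun φ y h => ?_⟩
  have hφ : φ = Polynomial.eval₂RingHom (φ.comp Polynomial.C) (φ Polynomial.X) := by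
    ext <;> simp
  obtain ⟨s, hs⟩ := (hE.signCorrespondence fun f hf =>
    h _ (Finset.mem_image_of_mem _ hf)).forth (φ Polynomial.X)
  exact ⟨Polynomial.eval₂RingHom y s, by ext; simp, hφ ▸ hs.mono hFE⟩

theorem hasSignElimination_mvPolynomial (σ : Type*) [Finite σ] :
    HasSignElimination (MvPolynomial.C : R →+* MvPolynomial σ R) := by
  induction σ using Finite.induction_empty_option with
  | of_equiv e h =>
    have hcomp := (hasSignElimination_ringEquiv
      (MvPolynomial.renameEquiv R e).toRingEquiv).comp h
    convert hcomp using 1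
    ext
    simp
  | h_empty => exact hasSignElimination_ringEquiv (MvPolynomial.isEmptyRingEquiv R PEmpty).symm
  | h_option h =>
    have hcomp := (hasSignElimination_ringEquiv
      (MvPolynomial.optionEquivLeft R _).symm.toRingEquiv).comp
        (hasSignElimination_polynomial.comp h)
    convert hcomp using 1
    ext
    simp

theorem hasSignElimination_rename_inr (κ ι : Type*) [Finite κ] :
    HasSignElimination
      (MvPolynomial.rename Sum.inr : MvPolynomial ι R →ₐ[R] MvPolynomial (κ ⊕ ι) R).toRingHom := by
  have hcomp := (hasSignElimination_ringEquiv
    (MvPolynomial.sumAlgEquiv R κ ι).symm.toRingEquiv).comp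
      (hasSignElimination_mvPolynomial (R := MvPolynomial ι R) κ)
  convert hcomp using 1
  ext <;> simp

end Elimination

section SignDetermined

open MvPolynomial SignType Filter Topology

variable {ι κ : Type*} {S T : Set (ι → ℝ)}

/-- A set is sign-determined if membership depends only on the signs of finitely many polynomials.
These are the semi-algebraic sets, described so that complements and projections are immediate. -/
def IsSignDetermined (S : Set (ι → ℝ)) : Prop :=
  ∃ G : Finset (MvPolynomial ι ℝ), ∀ x y : ι → ℝ, SignEq G (eval x) (eval y) → x ∈ S → y ∈ S

lemma eval_comp_rename (e : ι → κ) (x : κ → ℝ) :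
    (eval x).comp (rename e : MvPolynomial ι ℝ →ₐ[ℝ] MvPolynomial κ ℝ).toRingHom =
      eval (x ∘ e) := by
  ext <;> simp

namespace IsSignDetermined

lemma compl (hS : IsSignDetermined S) : IsSignDetermined Sᶜ := by
  obtain ⟨G, hG⟩ := hS
  exact ⟨G, fun x y hxy hx hy => hx (hG y x hxy.symm hy)⟩

lemma iInter {α : Type*} [Finite α] {S : α → Set (ι → ℝ)} (hS : ∀ a, IsSignDetermined (S a)) :
    IsSignDetermined (⋂ a, S a) := by
  classical
  cases nonempty_fintype α
  choose G hG using hS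
  refine ⟨Finset.univ.biUnion G, fun x y hxy hx => Set.mem_iInter.2 fun a => ?_⟩
  exact hG a x y (hxy.mono (Finset.subset_biUnion_of_mem G (Finset.mem_univ a)))
    (Set.mem_iInter.1 hx a)

lemma inter (hS : IsSignDetermined S) (hT : IsSignDetermined T) : IsSignDetermined (S ∩ T) := by
  rw [Set.inter_eq_iInter]
  exact iInter fun b => by cases b <;> assumption

lemma preimage_comp (hS : IsSignDetermined S) (e : ι → κ) :
    IsSignDetermined {x : κ → ℝ | x ∘ e ∈ S} := by
  classical
  obtain ⟨G, hG⟩ := hS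
  refine ⟨G.image (rename e).toRingHom, fun x y hxy => hG _ _ ?_⟩
  rwa [signEq_image_iff, eval_comp_rename, eval_comp_rename] at hxy

end IsSignDetermined

lemma exists_eq_eval (ψ : MvPolynomial ι ℝ →+* ℝ) : ∃ x, ψ = eval x := by
  have hconst : ψ.comp C = RingHom.id ℝ := Subsingleton.elim _ _
  refine ⟨fun i => ψ (X i), ringHom_ext (fun r => ?_) fun i => ?_⟩
  · rw [eval_C]
    exact RingHom.congr_fun hconst r
  · rw [eval_X]

/-- The Tarski–Seidenberg theorem. -/
theorem IsSignDetermined.exists_sumElim [Finite κ] {T : Set (κ ⊕ ι → ℝ)}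
    (hT : IsSignDetermined T) : IsSignDetermined {x : ι → ℝ | ∃ t : κ → ℝ, Sum.elim t x ∈ T} := by
  obtain ⟨F, hF⟩ := hT
  obtain ⟨G, hG⟩ := hasSignElimination_rename_inr (R := ℝ) κ ι F
  refine ⟨G, fun x y hxy ⟨t, ht⟩ => ?_⟩
  obtain ⟨ψ, hψy, hψ⟩ := hG (eval (Sum.elim t x)) (eval y) (by rwa [eval_comp_rename])
  obtain ⟨z, rfl⟩ := exists_eq_eval ψ
  have hzy : z ∘ Sum.inr = y := funext fun i => by simpa using RingHom.congr_fun hψy (X i)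
  refine ⟨z ∘ Sum.inl, ?_⟩
  rw [← hzy, Sum.elim_comp_inl_inr]
  exact hF _ _ hψ ht

lemma IsSignDetermined.exists_ne_zero_forall_eval_eq_zero (hS : IsSignDetermined S)
    (hint : interior S = ∅) : ∃ P : MvPolynomial ι ℝ, P ≠ 0 ∧ ∀ x ∈ S, eval x P = 0 := by
  classical
  obtain ⟨G, hG⟩ := hS
  refine ⟨∏ g ∈ G with g ≠ 0, g, Finset.prod_ne_zero_iff.2 fun g hg =>
    (Finset.mem_filter.1 hg).2, fun x hx => ?_⟩
  by_contra hne
  rw [eval_prod, ← ne_eq, Finset.prod_ne_zero_iff] at hne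
  have hsign : ∀ᶠ z in 𝓝 x, SignEq G (eval x) (eval z) := by
    refine (eventually_all_finset G).2 fun g hg => ?_
    by_cases hg0 : g = 0
    · simp [hg0]
    have hcont : ContinuousAt (fun z => sign (eval z g)) x :=
      (continuousAt_sign_of_ne_zero (hne g (Finset.mem_filter.2 ⟨hg, hg0⟩))).tendsto.comp
        (continuous_eval g).continuousAt
    exact (hcont.eventually_mem (mem_nhds_discrete.2 (Set.mem_singleton _))).mono fun _ => Eq.symm
  have hxint : x ∈ interior S := mem_interior_iff_mem_nhds.2 (hsign.mono fun z hz => hG x z hz hx)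
  exact Set.notMem_empty x (hint ▸ hxint)

end SignDetermined

section Semialgebraic

open MvPolynomial SignType

variable {ι : Type}

/-- A polynomial `P` together with a flag for equality, such that the condition on `P` prescribed by
the flag expresses that `g` has sign `σ`. -/
noncomputable def signCondition (g : MvPolynomial ι ℝ) (σ : SignType) : MvPolynomial ι ℝ × Bool :=
  (if σ = -1 then -g else g, decide (σ = 0))

lemma signCondition_holds_iff {g : MvPolynomial ι ℝ} {σ : SignType} {x : ι → ℝ} :
    (if (signCondition g σ).2 then eval x (signCondition g σ).1 = 0
      else 0 < eval x (signCondition g σ).1) ↔ sign (eval x g) = σ := by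
  cases σ <;> simp [signCondition, sign_eq_zero_iff, sign_eq_neg_one_iff, sign_eq_one_iff]

lemma IsSignDetermined.isSemialgebraic [Fintype ι] {S : Set (ι → ℝ)} (hS : IsSignDetermined S) :
    IsSemialgebraic S := by
  classical
  obtain ⟨G, hG⟩ := hS
  let signVector (x : ι → ℝ) (g : G) : SignType := sign (eval x g.1)
  let eG := Fintype.equivFin G
  let eT := Fintype.equivFin (signVector '' S)
  refine ⟨_, _, fun t l => (signCondition (eG.symm l).1 ((eT.symm t).1 (eG.symm l))).1,
    fun t l => (signCondition (eG.symm l).1 ((eT.symm t).1 (eG.symm l))).2, ?_⟩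
  ext x
  simp only [signCondition_holds_iff, Set.mem_iUnion, Set.mem_ofPred_eq]
  constructor
  · exact fun hx => ⟨eT ⟨signVector x, Set.mem_image_of_mem _ hx⟩, fun l => by
      rw [Equiv.symm_apply_apply]⟩
  · rintro ⟨t, ht⟩
    obtain ⟨z, hz, hzt⟩ := (eT.symm t).2
    refine hG z x (fun g hg => ?_) hz
    simpa [← hzt, signVector, eq_comm] using ht (eG ⟨g, hg⟩)

end Semialgebraic

section PolynomialConditions

open MvPolynomial SignType

variable {ι : Type*}

lemma isSignDetermined_setOf_lt (P Q : MvPolynomial ι ℝ) :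
    IsSignDetermined {x | eval x P < eval x Q} := by
  refine ⟨{Q - P}, fun x y hxy hx => ?_⟩
  have hsign := hxy _ (Finset.mem_singleton_self _)
  rwa [(eval x).map_sub, (eval y).map_sub, sign_pos (sub_pos.2 hx), eq_comm, sign_eq_one_iff,
    sub_pos] at hsign

lemma isSignDetermined_setOf_ne_zero (P : MvPolynomial ι ℝ) :
    IsSignDetermined {x | eval x P ≠ 0} :=
  ⟨{P}, fun _ _ hxy => mt (hxy.eq_zero_iff (Finset.mem_singleton_self _)).2⟩

end PolynomialConditions

section Graph

open MvPolynomial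

variable {ι : Type*} (F : (ι → ℝ) → ℝ)

lemma IsSignDetermined.graph_of_epigraph
    (hF : IsSignDetermined {y : Option ι → ℝ | F (y ∘ some) < y none}) :
    IsSignDetermined {y : Option ι → ℝ | y none = F (y ∘ some)} := by
  let replaceTop : Option ι → Unit ⊕ Option ι := fun o => o.elim (.inl ()) (.inr ∘ some)
  have hlt : IsSignDetermined {w : Unit ⊕ Option ι → ℝ | w (.inr none) < w (.inl ())} := by
    simpa only [eval_X] using isSignDetermined_setOf_lt
      (X (Sum.inr none) : MvPolynomial (Unit ⊕ Option ι) ℝ) (X (Sum.inl ()))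
  have hbelow := (hlt.inter (hF.preimage_comp replaceTop).compl).exists_sumElim
  convert hF.compl.inter hbelow.compl using 1
  ext y
  suffices y none = F (y ∘ some) ↔
      F (y ∘ some) ≥ y none ∧ ∀ c : Unit → ℝ, y none < c () → F (y ∘ some) < c () by
    simpa [Function.comp_def, replaceTop] using this
  exact ⟨fun h => ⟨h.le, fun _ hc => h ▸ hc⟩, fun ⟨hle, hlt⟩ => hle.eq_of_not_lt fun h =>
    (hlt (fun _ => F (y ∘ some)) h).false⟩

lemma interior_graph_eq_empty : interior {y : Option ι → ℝ | y none = F (y ∘ some)} = ∅ := by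
  classical
  refine Set.eq_empty_of_forall_notMem fun y hy => ?_
  have hcont : Continuous fun c : ℝ => Function.update y none c :=
    continuous_const.update none continuous_id
  have hsub : (fun c => Function.update y none c) ⁻¹'
      interior {y : Option ι → ℝ | y none = F (y ∘ some)} ⊆ {F (y ∘ some)} := fun c hc => by
    simpa [Function.comp_def] using interior_subset hc
  have hmem : y none ∈ interior {F (y ∘ some)} :=
    interior_maximal hsub (isOpen_interior.preimage hcont) (by simpa using hy)
  simp at hmem

end Graph

section Capacity

variable {k m : ℕ} {d : Fin k → ℕ} {n : Fin m → ℕ} {A : Fin k → Fin m → ℕ}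

lemma exists_natCast_mul_eq_natCast {α : Type*} [Finite α] {p : α → ℚ} (hp : ∀ j, 0 ≤ p j) :
    ∃ L : ℕ, L ≠ 0 ∧ ∃ q : α → ℕ, ∀ j, p j * L = q j := by
  obtain ⟨b, hb⟩ := IsLocalization.exist_integer_multiples_of_finite (nonZeroDivisors ℤ) p
  choose z hz using hb
  refine ⟨(b : ℤ).natAbs, Int.natAbs_ne_zero.2 (nonZeroDivisors.coe_ne_zero b),
    fun j => (z j).natAbs, fun j => ?_⟩
  have hzj : (z j : ℚ) = p j * (b : ℤ) := by simpa [mul_comm] using hz j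
  rw [Nat.cast_natAbs, Nat.cast_natAbs, Int.cast_abs, Int.cast_abs, hzj, abs_mul,
    abs_of_nonneg (hp j)]

open scoped MatrixOrder in
lemma posDef_iff_exists_eq_transpose_mul_self {ι : Type*} [Fintype ι] [DecidableEq ι]
    {Y : Matrix ι ι ℝ} : Y.PosDef ↔ ∃ B : Matrix ι ι ℝ, B.det ≠ 0 ∧ Y = Bᵀ * B := by
  simp_rw [← isStrictlyPositive_iff_posDef, CStarAlgebra.isStrictlyPositive_iff_eq_star_mul_self,
    isUnit_iff_isUnit_det, isUnit_iff_ne_zero, star_eq_conjTranspose,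
    conjTranspose_eq_transpose_of_trivial]

/-- The numerator of the capacity functional, over an arbitrary algebra so that it can be applied
to generic matrices. -/
noncomputable def capNumerator {S : Type*} [CommRing S] [Algebra ℝ S] (p : Fin m → ℝ)
    (V : ∀ i : Fin k, ∀ j : Fin m, Fin (A i j) → Matrix (Fin (n j)) (Fin (d i)) S)
    (Y : ∀ j : Fin m, Matrix (Fin (n j)) (Fin (n j)) S) : S :=
  ∏ i : Fin k, (∑ j : Fin m, p j • ∑ a : Fin (A i j), (V i j a)ᵀ * Y j * V i j a).det

/-- The Gram matrices `Bⱼᵀ Bⱼ` of the tuple of square matrices `Bⱼ` with entries `t`. -/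
def gramTuple {S : Type*} [CommRing S] (t : (j : Fin m) × (Fin (n j) × Fin (n j)) → S) (j : Fin m) :
    Matrix (Fin (n j)) (Fin (n j)) S :=
  (Matrix.of fun r c => t ⟨j, r, c⟩)ᵀ * Matrix.of fun r c => t ⟨j, r, c⟩

section Map

variable {S T : Type*} [CommRing S] [CommRing T]

lemma map_capNumerator [Algebra ℝ S] [Algebra ℝ T] (f : S →ₐ[ℝ] T) (p : Fin m → ℝ)
    (V : ∀ i : Fin k, ∀ j : Fin m, Fin (A i j) → Matrix (Fin (n j)) (Fin (d i)) S)
    (Y : ∀ j : Fin m, Matrix (Fin (n j)) (Fin (n j)) S) :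
    f (capNumerator p V Y) =
      capNumerator p (fun i j a => (V i j a).map f) fun j => (Y j).map f := by
  simp [capNumerator, AlgHom.map_det, AlgHom.mapMatrix_apply, transpose_map]

lemma map_gramTuple (f : S →+* T) (t : (j : Fin m) × (Fin (n j) × Fin (n j)) → S) (j : Fin m) :
    (gramTuple t j).map f = gramTuple (f ∘ t) j := by
  rw [gramTuple, Matrix.map_mul, transpose_map]
  rfl

end Map

lemma capVal_eq_div (p : Fin m → ℝ)
    (V : ∀ i : Fin k, ∀ j : Fin m, Fin (A i j) → Matrix (Fin (n j)) (Fin (d i)) ℝ)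
    (Y : ∀ j : Fin m, Matrix (Fin (n j)) (Fin (n j)) ℝ) :
    capVal p V Y = capNumerator p V Y / ∏ j, (Y j).det ^ p j := rfl

section PosDef

variable {p : Fin m → ℝ} (hp : ∀ j, 0 ≤ p j)
  (V : ∀ i : Fin k, ∀ j : Fin m, Fin (A i j) → Matrix (Fin (n j)) (Fin (d i)) ℝ)
  {Y : ∀ j : Fin m, Matrix (Fin (n j)) (Fin (n j)) ℝ} (hY : ∀ j, (Y j).PosDef)
include hp

section

include hY

lemma capNumerator_nonneg : 0 ≤ capNumerator p V Y := by
  refine Finset.prod_nonneg fun i _ => PosSemidef.det_nonneg ?_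
  refine posSemidef_sum _ fun j _ => PosSemidef.smul (posSemidef_sum _ fun a _ => ?_) (hp j)
  rw [← conjTranspose_eq_transpose_of_trivial]
  exact (hY j).posSemidef.conjTranspose_mul_mul_same (V i j a)

lemma capVal_nonneg : 0 ≤ capVal p V Y :=
  div_nonneg (capNumerator_nonneg hp V hY)
    (Finset.prod_nonneg fun j _ => Real.rpow_nonneg (hY j).det_pos.le _)

lemma capVal_lt_iff {L : ℕ} (hL : L ≠ 0) {q : Fin m → ℕ} (hq : ∀ j, p j * L = q j) {c : ℝ}
    (hc : 0 ≤ c) :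
    capVal p V Y < c ↔ capNumerator p V Y ^ L < c ^ L * ∏ j, (Y j).det ^ q j := by
  have hden : 0 < ∏ j, (Y j).det ^ p j :=
    Finset.prod_pos fun j _ => Real.rpow_pos_of_pos (hY j).det_pos _
  have hden_pow : (∏ j, (Y j).det ^ p j) ^ L = ∏ j, (Y j).det ^ q j := by
    rw [← Finset.prod_pow]
    exact Finset.prod_congr rfl fun j _ => by
      rw [← Real.rpow_mul_natCast (hY j).det_pos.le, hq, Real.rpow_natCast]
  rw [capVal_eq_div, div_lt_iff₀ hden, ← hden_pow, ← mul_pow,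
    pow_lt_pow_iff_left₀ (capNumerator_nonneg hp V hY) (mul_nonneg hc hden.le) hL]

end

lemma cap_lt_iff {c : ℝ} :
    cap p V < c ↔ ∃ Y : ∀ j : Fin m, Matrix (Fin (n j)) (Fin (n j)) ℝ,
      (∀ j, (Y j).PosDef) ∧ capVal p V Y < c := by
  have hbdd : BddBelow {r | ∃ Y : ∀ j : Fin m, Matrix (Fin (n j)) (Fin (n j)) ℝ,
      (∀ j, (Y j).PosDef) ∧ r = capVal p V Y} := by
    refine ⟨0, ?_⟩
    rintro _ ⟨Y, hY, rfl⟩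
    exact capVal_nonneg hp V hY
  rw [cap, csInf_lt_iff hbdd ⟨_, fun _ => 1, fun _ => .one, rfl⟩]
  aesop

lemma cap_lt_iff_exists_gramTuple {L : ℕ} (hL : L ≠ 0) {q : Fin m → ℕ}
    (hq : ∀ j, p j * L = q j) {c : ℝ} :
    cap p V < c ↔ 0 < c ∧ ∃ t : (j : Fin m) × (Fin (n j) × Fin (n j)) → ℝ,
      (∀ j, (gramTuple t j).det ≠ 0) ∧
      capNumerator p V (gramTuple t) ^ L < c ^ L * ∏ j, (gramTuple t j).det ^ q j := by
  have posDef_iff {Y : ∀ j : Fin m, Matrix (Fin (n j)) (Fin (n j)) ℝ} : (∀ j, (Y j).PosDef) ↔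
      ∃ t, (∀ j, (gramTuple t j).det ≠ 0) ∧ Y = gramTuple t := by
    simp_rw [posDef_iff_exists_eq_transpose_mul_self]
    constructor
    · intro h
      choose B hB hY using h
      refine ⟨fun e => B e.1 e.2.1 e.2.2, fun j => ?_, funext hY⟩
      exact (det_mul _ _).trans_ne (mul_ne_zero ((det_transpose (B j)).trans_ne (hB j)) (hB j))
    · rintro ⟨t, ht, rfl⟩ j
      exact ⟨_, by simpa [gramTuple] using ht j, rfl⟩
  rw [cap_lt_iff hp]
  constructor
  · rintro ⟨Y, hY, hlt⟩
    have hc := (capVal_nonneg hp V hY).trans_lt hlt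
    obtain ⟨t, ht, rfl⟩ := posDef_iff.1 hY
    exact ⟨hc, t, ht, (capVal_lt_iff hp V hY hL hq hc.le).1 hlt⟩
  · rintro ⟨hc, t, ht, hlt⟩
    have hY := posDef_iff.2 ⟨t, ht, rfl⟩
    exact ⟨_, hY, (capVal_lt_iff hp V hY hL hq hc.le).2 hlt⟩

end PosDef

section Generic

open MvPolynomial

variable {σ : Type*} (w : σ → ℝ)

lemma eval_det_gramTuple (e : (j : Fin m) × (Fin (n j) × Fin (n j)) → σ) (j : Fin m) :
    eval w (gramTuple (fun i => X (e i)) j).det = (gramTuple (w ∘ e) j).det := by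
  rw [RingHom.map_det, RingHom.mapMatrix_apply, map_gramTuple]
  simp [Function.comp_def]

lemma eval_capNumerator_gramTuple (p : Fin m → ℝ) (v : QIdx k m d n A → σ)
    (e : (j : Fin m) × (Fin (n j) × Fin (n j)) → σ) :
    eval w (capNumerator p (fun i j a => .of fun r c => X (v ⟨i, j, a, r, c⟩))
      (gramTuple fun i => X (e i))) =
      capNumerator p (toDatum (w ∘ v)) (gramTuple (w ∘ e)) := by
  rw [← aeval_eq_eval, map_capNumerator]
  congr 1
  · ext
    simp [toDatum]
  · funext j
    refine (map_gramTuple (aeval w : MvPolynomial σ ℝ →ₐ[ℝ] ℝ).toRingHom _ j).trans ?_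
    simp [Function.comp_def]

lemma isSignDetermined_epigraph_cap {p : Fin m → ℚ} (hp : ∀ j, 0 ≤ p j) :
    IsSignDetermined {y : Option (QIdx k m d n A) → ℝ |
      cap (fun j => (p j : ℝ)) (toDatum (y ∘ some)) < y none} := by
  obtain ⟨L, hL, q, hq⟩ := exists_natCast_mul_eq_natCast hp
  have hq_real (j : Fin m) : (p j : ℝ) * L = q j := mod_cast hq j
  let Y := gramTuple (n := n) fun i =>
    (X (Sum.inl i) : MvPolynomial (_ ⊕ Option (QIdx k m d n A)) ℝ)
  let N := capNumerator (d := d) (A := A) (fun j => (p j : ℝ))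
    (fun i j a => .of fun r c => X (Sum.inr (some ⟨i, j, a, r, c⟩))) Y
  have eval_N (w) : eval w N =
      capNumerator _ (toDatum (w ∘ Sum.inr ∘ some)) (gramTuple (w ∘ Sum.inl)) :=
    eval_capNumerator_gramTuple w _ (Sum.inr ∘ some) Sum.inl
  have hdet := IsSignDetermined.iInter fun j => isSignDetermined_setOf_ne_zero (Y j).det
  have hlt := isSignDetermined_setOf_lt (N ^ L) (X (Sum.inr none) ^ L * ∏ j, (Y j).det ^ q j)
  have hpos := isSignDetermined_setOf_lt 0 (X none : MvPolynomial (Option (QIdx k m d n A)) ℝ)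
  convert hpos.inter (hdet.inter hlt).exists_sumElim using 1
  ext y
  simp [cap_lt_iff_exists_gramTuple (fun j => Rat.cast_nonneg.2 (hp j)) _ hL hq_real, Y, eval_N,
    eval_det_gramTuple, Function.comp_def]

end Generic

end Capacity

/-- Assume the weights are positive rationals. Then the graph of
`V ↦ cap(V, p)` on the set `𝒮` of feasible data is a semi-algebraic subset of
`ℝ^{D₁ + 1}`; in particular, there is a nonzero real polynomial `P` in `D₁ + 1` variables
with `P(V, cap(V, p)) = 0` for every `V ∈ 𝒮`. -/
theorem cap_graph_semialgebraic_of_rational {k m : ℕ} (hk : 0 < k) (hm : 0 < m)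
    {d : Fin k → ℕ} {n : Fin m → ℕ} {A : Fin k → Fin m → ℕ} (p : Fin m → ℚ)
    (hd : ∀ i, 0 < d i) (hn : ∀ j, 0 < n j) (hp : ∀ j, 0 < p j)
    (hbal : ∑ i : Fin k, (d i : ℝ) = ∑ j : Fin m, (p j : ℝ) * (n j : ℝ)) :
    IsSemialgebraic { y : Option (QIdx k m d n A) → ℝ |
      0 < cap (fun j => (p j : ℝ)) (toDatum fun q => y (some q)) ∧
      y none = cap (fun j => (p j : ℝ)) (toDatum fun q => y (some q)) } ∧
    ∃ P : MvPolynomial (Option (QIdx k m d n A)) ℝ, P ≠ 0 ∧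
      ∀ x : QIdx k m d n A → ℝ, 0 < cap (fun j => (p j : ℝ)) (toDatum x) →
        MvPolynomial.eval (fun o => o.elim (cap (fun j => (p j : ℝ)) (toDatum x)) x) P = 0 := by
  let F (x : QIdx k m d n A → ℝ) : ℝ := cap (fun j => (p j : ℝ)) (toDatum x)
  have hgraph : IsSignDetermined {y : Option (QIdx k m d n A) → ℝ | y none = F (y ∘ some)} :=
    .graph_of_epigraph F (isSignDetermined_epigraph_cap fun j => (hp j).le)
  have hpos : IsSignDetermined {y : Option (QIdx k m d n A) → ℝ | 0 < y none} := by
    simpa using isSignDetermined_setOf_lt 0 (MvPolynomial.X none)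
  obtain ⟨P, hP, hzero⟩ := hgraph.exists_ne_zero_forall_eval_eq_zero (interior_graph_eq_empty F)
  refine ⟨?_, P, hP, fun x _ => hzero _ rfl⟩
  convert (hpos.inter hgraph).isSemialgebraic using 1
  ext y
  exact and_congr_left fun h => by rw [Set.mem_ofPred_eq, h]
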